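/- arXiv:2508.20100 — 6 statements merged into one kernel-verified Lean document; each statement's English description precedes it below -/
import Mathlib

section
/- Let ψ, ζ : [0,∞) → ℝ be continuous functions for which there exist constants Q > 0 and η > 0 with |ψ(t)| ≤ Q·exp(t/η) and |ζ(t)| ≤ Q·exp(t/η) for all t ≥ 0. Then for every u with 0 < u < η, the Sumudu transform of the convolution satisfies S[(ψ * ζ)](u) = u · S[ψ](u) · S[ζ](u). -/
open MeasureTheory Real Set

/-!
Put `f t = ζ (t u) e^{-t}` and `g t = ψ (t u) e^{-t}`. Both are integrable on `(0, ∞)` because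
they are continuous there and bounded by a multiple of `e^{-(1 - u/η) t}` with `u < η`. Since
`e^{-x} e^{-(t-x)} = e^{-t}`, the substitution `x ↦ x u` identifies the integrand on the left with
`u` times the one-sided convolution of `f` and `g`, and the integral of a one-sided convolution
is the product of the integrals (`integral_posConvolution`, i.e. Fubini).
-/

lemma integrableOn_sumudu_integrand (k : ℝ → ℝ) (hk : ContinuousOn k (Ici 0))
    (Q η : ℝ) (hη : 0 < η) (hb : ∀ t ≥ (0:ℝ), |k t| ≤ Q * Real.exp (t / η))
    (u : ℝ) (hu0 : 0 < u) (huη : u < η) :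
    IntegrableOn (fun t => k (t * u) * Real.exp (-t)) (Ioi 0) := by
  have hrate : 0 < 1 - u / η := by
    rw [sub_pos, div_lt_one hη]
    exact huη
  have hdom : IntegrableOn (fun t => Q * Real.exp (-(1 - u / η) * t)) (Ioi 0) :=
    (exp_neg_integrableOn_Ioi 0 hrate).const_mul Q
  refine Integrable.mono' hdom ?_ ?_
  · refine ContinuousOn.aestronglyMeasurable ?_ measurableSet_Ioi
    refine ContinuousOn.mul (hk.comp (by fun_prop) ?_) (by fun_prop)
    intro t ht
    exact mul_nonneg (le_of_lt ht) hu0.le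
  · filter_upwards [ae_restrict_mem measurableSet_Ioi] with t ht
    rw [norm_mul, Real.norm_eq_abs, Real.norm_eq_abs, abs_of_pos (Real.exp_pos _)]
    calc |k (t * u)| * Real.exp (-t) ≤ Q * Real.exp (t * u / η) * Real.exp (-t) := by
          gcongr
          exact hb _ (mul_nonneg (le_of_lt ht) hu0.le)
      _ = Q * Real.exp (-(1 - u / η) * t) := by
          rw [mul_assoc, ← Real.exp_add]
          congr 2
          ring

/-- Sumudu transform of the convolution: S[(ψ * ζ)](u) = u · S[ψ](u) · S[ζ](u). -/
theorem sumudu_convolution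
    (ψ ζ : ℝ → ℝ) (hψc : ContinuousOn ψ (Ici 0)) (hζc : ContinuousOn ζ (Ici 0))
    (Q η : ℝ) (hQ : 0 < Q) (hη : 0 < η)
    (hψb : ∀ t ≥ (0:ℝ), |ψ t| ≤ Q * Real.exp (t / η))
    (hζb : ∀ t ≥ (0:ℝ), |ζ t| ≤ Q * Real.exp (t / η))
    (u : ℝ) (hu0 : 0 < u) (huη : u < η) :
    ∫ t in Ioi (0:ℝ), (∫ x in (0:ℝ)..(t * u), ψ (t * u - x) * ζ x) * Real.exp (-t)
      = u * (∫ t in Ioi (0:ℝ), ψ (t * u) * Real.exp (-t))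
          * (∫ t in Ioi (0:ℝ), ζ (t * u) * Real.exp (-t)) := by
  have hψ := integrableOn_sumudu_integrand ψ hψc Q η hη hψb u hu0 huη
  have hζ := integrableOn_sumudu_integrand ζ hζc Q η hη hζb u hu0 huη
  have hconv := integral_posConvolution hζ hψ (ContinuousLinearMap.mul ℝ ℝ)
  simp only [ContinuousLinearMap.mul_apply'] at hconv
  have hinner : ∀ t : ℝ,
      (∫ x in (0:ℝ)..(t * u), ψ (t * u - x) * ζ x) * Real.exp (-t)
        = u * ∫ x in (0:ℝ)..t,
            ζ (x * u) * Real.exp (-x) * (ψ ((t - x) * u) * Real.exp (-(t - x))) := by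
    intro t
    have hsubst := intervalIntegral.mul_integral_comp_mul_right
      (f := fun x => ψ (t * u - x) * ζ x) (a := 0) (b := t) u
    rw [zero_mul] at hsubst
    rw [← hsubst, mul_assoc, ← intervalIntegral.integral_mul_const]
    congr 1
    refine intervalIntegral.integral_congr fun x _ => ?_
    have hexp : Real.exp (-t) = Real.exp (-x) * Real.exp (-(t - x)) := by
      rw [← Real.exp_add]
      congr 1
      ring
    simp only [hexp, sub_mul]
    ring
  simp only [hinner]
  rw [integral_const_mul, hconv]
  ring
end

section
/- Let α ∈ (0,1), and let k : [0,∞) → ℝ be continuously differentiable with constants Q > 0 and η > 0 such that |k(t)| ≤ Q·exp(t/η) and |k'(t)| ≤ Q·exp(t/η) for all t ≥ 0. Then for every u with 0 < u < η, the Sumudu transform of the Caputo fractional derivative of k of order α satisfies S[(^C_0 D^α k)](u) = u^{−α}·(S[k](u) − k(0)). -/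
/-!
After the substitution `x = t * u`, the Sumudu transform is `S[g](u) = r * L[g](r)`, where `r = 1 / u`
and `L[g](r) = ∫₀^∞ g x * exp (-(r * x)) dx` is the Laplace integral. The Caputo derivative is
`1 / Γ(1 - α)` times the convolution of `k'` with `x ^ (-α)`, and since
`exp (-(r * x)) = exp (-(r * s)) * exp (-(r * (x - s)))`, its Laplace integral is the product of the
two Laplace integrals (`laplace_caputo`); the one of `x ^ (-α)` is `(1 / r) ^ (1 - α) * Γ(1 - α)`.
Integration by parts gives `L[k'](r) = r * L[k](r) - k 0` (`laplace_deriv`). The condition `u < η`,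
that is `1 / η < r`, makes all these integrals converge absolutely.
-/

open MeasureTheory Real Set

lemma sumudu_eq_laplace (g : ℝ → ℝ) {u : ℝ} (hu : 0 < u) :
    ∫ t in Ioi (0:ℝ), g (t * u) * Real.exp (-t)
      = (1 / u) * ∫ x in Ioi (0:ℝ), g x * Real.exp (-(1 / u * x)) := by
  have h := integral_comp_mul_left_Ioi (fun x => g x * Real.exp (-(1 / u * x))) 0 hu
  rw [mul_zero, smul_eq_mul, ← one_div] at h
  rw [← h]
  refine setIntegral_congr_fun measurableSet_Ioi fun t _ => ?_
  have : 1 / u * (u * t) = t := by field_simp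
  simp only [this]
  rw [mul_comm u t]

lemma abs_mul_exp_le {f : ℝ → ℝ} {Q η r : ℝ} (hb : ∀ t ≥ (0:ℝ), |f t| ≤ Q * Real.exp (t / η))
    {x : ℝ} (hx : 0 ≤ x) :
    |f x * Real.exp (-(r * x))| ≤ Q * Real.exp ((1 / η - r) * x) := by
  rw [abs_mul, abs_of_pos (Real.exp_pos _)]
  have h := mul_le_mul_of_nonneg_right (hb x hx) (Real.exp_pos (-(r * x))).le
  rw [mul_assoc, ← Real.exp_add] at h
  rwa [show (1 / η - r) * x = x / η + -(r * x) by ring]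

lemma integrableOn_mul_exp {f : ℝ → ℝ} {Q η r : ℝ} (hf : ContinuousOn f (Ici 0))
    (hb : ∀ t ≥ (0:ℝ), |f t| ≤ Q * Real.exp (t / η)) (hr : 1 / η < r) :
    IntegrableOn (fun x => f x * Real.exp (-(r * x))) (Ioi 0) := by
  refine Integrable.mono'
    ((integrableOn_exp_mul_Ioi (a := 1 / η - r) (by linarith) 0).const_mul Q) ?_ ?_
  · refine ContinuousOn.aestronglyMeasurable ?_ measurableSet_Ioi
    exact (hf.mono Ioi_subset_Ici_self).mul (by fun_prop)
  · filter_upwards [ae_restrict_mem measurableSet_Ioi] with x hx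
    exact abs_mul_exp_le hb (le_of_lt hx)

lemma laplace_deriv {k k' : ℝ → ℝ} {Q η r : ℝ}
    (hderiv : ∀ t ≥ (0:ℝ), HasDerivWithinAt k (k' t) (Ici 0) t)
    (hk'c : ContinuousOn k' (Ici 0))
    (hkb : ∀ t ≥ (0:ℝ), |k t| ≤ Q * Real.exp (t / η))
    (hk'b : ∀ t ≥ (0:ℝ), |k' t| ≤ Q * Real.exp (t / η)) (hr : 1 / η < r) :
    ∫ x in Ioi (0:ℝ), k' x * Real.exp (-(r * x))
      = r * (∫ x in Ioi (0:ℝ), k x * Real.exp (-(r * x))) - k 0 := by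
  have hkc : ContinuousOn k (Ici 0) := fun t ht => (hderiv t ht).continuousWithinAt
  have hv : ∀ x : ℝ, HasDerivAt (fun x => Real.exp (-(r * x))) (-r * Real.exp (-(r * x))) x := by
    intro x
    have := (((hasDerivAt_id x).const_mul r).neg).exp
    convert! this using 1
    simp
    ring
  have hk_int := integrableOn_mul_exp hkc hkb hr
  have h := integral_Ioi_mul_deriv_eq_deriv_mul (a := 0) (u := k) (u' := k')
    (v := fun x => Real.exp (-(r * x))) (v' := fun x => -r * Real.exp (-(r * x)))
    (a' := k 0) (b' := 0)
    (fun x hx => (hderiv x (le_of_lt hx)).hasDerivAt (Ici_mem_nhds hx)) (fun x _ => hv x)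
    (by
      refine (hk_int.const_mul (-r)).congr (Filter.Eventually.of_forall fun x => ?_)
      simp only [Pi.mul_apply]
      ring)
    (integrableOn_mul_exp hk'c hk'b hr)
    (by
      have h1 : ContinuousWithinAt (k * fun x => Real.exp (-(r * x))) (Ioi 0) 0 :=
        ((hkc 0 self_mem_Ici).mono Ioi_subset_Ici_self).mul (by fun_prop)
      simpa [ContinuousWithinAt] using h1)
    (by
      have h2 : Filter.Tendsto (fun x : ℝ => Q * Real.exp ((1 / η - r) * x)) Filter.atTop
          (nhds 0) := by
        simpa using (Real.tendsto_exp_atBot.comp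
          (Filter.tendsto_id.const_mul_atTop_of_neg (r := 1 / η - r) (by linarith))).const_mul Q
      refine squeeze_zero_norm' ?_ h2
      filter_upwards [Filter.eventually_ge_atTop 0] with x hx
      exact abs_mul_exp_le hkb hx)
  have h3 : ∫ x in Ioi (0:ℝ), k x * (-r * Real.exp (-(r * x)))
      = -r * ∫ x in Ioi (0:ℝ), k x * Real.exp (-(r * x)) := by
    rw [← integral_const_mul]
    congr 1 with x
    ring
  rw [h3] at h
  linarith

lemma laplace_caputo {α : ℝ} (hα1 : α < 1) {k' : ℝ → ℝ} {r : ℝ} (hr : 0 < r)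
    (hint : IntegrableOn (fun x => k' x * Real.exp (-(r * x))) (Ioi 0))
    {caputo : ℝ → ℝ}
    (hcaputo : ∀ t ≥ (0:ℝ),
      caputo t = (1 / Real.Gamma (1 - α)) * ∫ s in (0:ℝ)..t, (t - s) ^ (-α) * k' s) :
    ∫ x in Ioi (0:ℝ), caputo x * Real.exp (-(r * x))
      = (1 / r) ^ (1 - α) * ∫ x in Ioi (0:ℝ), k' x * Real.exp (-(r * x)) := by
  have hpow : IntegrableOn (fun x : ℝ => x ^ (-α) * Real.exp (-(r * x))) (Ioi 0) := by
    simpa using integrableOn_rpow_mul_exp_neg_mul_rpow (s := -α) (p := 1) (b := r)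
      (by linarith) one_pos hr
  have hconv := integral_posConvolution hint hpow (ContinuousLinearMap.mul ℝ ℝ)
  simp_rw [ContinuousLinearMap.mul_apply'] at hconv
  have hG := integral_rpow_mul_exp_neg_mul_Ioi (a := 1 - α) (r := r) (by linarith) hr
  rw [show 1 - α - 1 = -α by ring] at hG
  rw [hG] at hconv
  have hGne : Real.Gamma (1 - α) ≠ 0 := (Real.Gamma_pos_of_pos (by linarith)).ne'
  have key : ∫ x in Ioi (0:ℝ), caputo x * Real.exp (-(r * x))
      = (1 / Real.Gamma (1 - α)) * ∫ x in Ioi (0:ℝ), ∫ t in (0:ℝ)..x,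
        k' t * Real.exp (-(r * t)) * ((x - t) ^ (-α) * Real.exp (-(r * (x - t)))) := by
    rw [← integral_const_mul]
    refine setIntegral_congr_fun measurableSet_Ioi fun x hx => ?_
    rw [hcaputo x (le_of_lt hx), mul_assoc, ← intervalIntegral.integral_mul_const]
    congr 2 with t
    rw [show -(r * x) = -(r * t) + -(r * (x - t)) by ring, Real.exp_add]
    ring
  rw [key, hconv]
  field_simp

/-- Sumudu transform of the Caputo fractional derivative of order α ∈ (0,1):
S[(^C_0 D^α k)](u) = u^{−α}·(S[k](u) − k(0)). -/
theorem sumudu_caputo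
    (α : ℝ) (hα0 : 0 < α) (hα1 : α < 1)
    (k k' : ℝ → ℝ)
    (hderiv : ∀ t ≥ (0:ℝ), HasDerivWithinAt k (k' t) (Ici 0) t)
    (hk'c : ContinuousOn k' (Ici 0))
    (Q η : ℝ) (hQ : 0 < Q) (hη : 0 < η)
    (hkb : ∀ t ≥ (0:ℝ), |k t| ≤ Q * Real.exp (t / η))
    (hk'b : ∀ t ≥ (0:ℝ), |k' t| ≤ Q * Real.exp (t / η))
    (u : ℝ) (hu0 : 0 < u) (huη : u < η)
    (caputo : ℝ → ℝ)
    (hcaputo : ∀ t ≥ (0:ℝ),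
      caputo t = (1 / Real.Gamma (1 - α)) * ∫ s in (0:ℝ)..t, (t - s) ^ (-α) * k' s) :
    ∫ t in Ioi (0:ℝ), caputo (t * u) * Real.exp (-t)
      = u ^ (-α) * ((∫ t in Ioi (0:ℝ), k (t * u) * Real.exp (-t)) - k 0) := by
  have hr : 1 / η < 1 / u := one_div_lt_one_div_of_lt hu0 huη
  have hu1 : 0 < 1 / u := by positivity
  rw [sumudu_eq_laplace caputo hu0, sumudu_eq_laplace k hu0,
    laplace_caputo hα1 hu1 (integrableOn_mul_exp hk'c hk'b hr) hcaputo,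
    laplace_deriv hderiv hk'c hkb hk'b hr, one_div_one_div, ← mul_assoc]
  congr 1
  rw [show 1 - α = 1 + -α by ring, Real.rpow_add hu0, Real.rpow_one]
  field_simp
end

section
/- Let α ∈ (0,1), a > 0, and u > 0 with a·u^α < 1. Then the Sumudu transform of the function t ↦ E_α(−a·t^α) satisfies ∫₀^∞ E_α(−a·(tu)^α)·e^{−t} dt = 1/(1 + a·u^α). -/
open MeasureTheory Real Set

/-!
Expand `E` as its defining series and integrate term by term. On `t > 0` the `n`-th term is
`(-(a u^α))^n / Γ(αn + 1)` times the Gamma integrand `e^{-t} t^{αn}`, so it integrates to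
`(-(a u^α))^n`, and its absolute value integrates to `(a u^α)^n`. The latter is summable because
`a u^α < 1`, which justifies the interchange, and the resulting geometric series sums to
`1 / (1 + a u^α)`.
-/

/-- Sumudu transform of the Mittag-Leffler function:
S[E_α(−a·t^α)](u) = 1/(1 + a·u^α). -/
theorem sumudu_mittagLeffler
    (α a u : ℝ) (hα0 : 0 < α) (hα1 : α < 1) (ha : 0 < a) (hu : 0 < u)
    (hau : a * u ^ α < 1)
    (E : ℝ → ℝ) (hE : ∀ x : ℝ, E x = ∑' n : ℕ, x ^ n / Real.Gamma (α * n + 1)) :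
    ∫ t in Ioi (0:ℝ), E (-a * (t * u) ^ α) * Real.exp (-t) = 1 / (1 + a * u ^ α) := by
  have hb : 0 < a * u ^ α := by positivity
  set b := a * u ^ α with hbdef
  have hs (n : ℕ) : 0 < α * n + 1 := by positivity
  have hG (n : ℕ) : 0 < Real.Gamma (α * n + 1) := Real.Gamma_pos_of_pos (hs n)
  let F : ℕ → ℝ → ℝ := fun n t ↦
    (-b) ^ n / Real.Gamma (α * n + 1) * (Real.exp (-t) * t ^ (α * n + 1 - 1))
  have hint (n : ℕ) : Integrable (F n) (volume.restrict (Ioi 0)) :=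
    (Real.GammaIntegral_convergent (hs n)).const_mul _
  have hval (n : ℕ) : ∫ t in Ioi (0:ℝ), F n t = (-b) ^ n := by
    simp only [F]
    rw [integral_const_mul, ← Real.Gamma_eq_integral (hs n), div_mul_cancel₀ _ (hG n).ne']
  have hnorm (n : ℕ) : ∫ t in Ioi (0:ℝ), ‖F n t‖ = b ^ n := by
    have h : ∀ t ∈ Ioi (0:ℝ), ‖F n t‖ =
        b ^ n / Real.Gamma (α * n + 1) * (Real.exp (-t) * t ^ (α * n + 1 - 1)) := by
      intro t ht
      have ht' : 0 ≤ Real.exp (-t) * t ^ (α * n + 1 - 1) :=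
        mul_nonneg (Real.exp_pos _).le (Real.rpow_nonneg (le_of_lt ht) _)
      simp only [F]
      rw [norm_mul, norm_div, norm_pow, norm_neg, Real.norm_of_nonneg hb.le,
        Real.norm_of_nonneg (hG n).le, Real.norm_of_nonneg ht']
    rw [setIntegral_congr_fun measurableSet_Ioi h, integral_const_mul,
      ← Real.Gamma_eq_integral (hs n), div_mul_cancel₀ _ (hG n).ne']
  have hsum : Summable fun n ↦ ∫ t in Ioi (0:ℝ), ‖F n t‖ := by
    simp only [hnorm]
    exact summable_geometric_of_lt_one hb.le hau
  have hpt : ∀ t ∈ Ioi (0:ℝ), E (-a * (t * u) ^ α) * Real.exp (-t) = ∑' n, F n t := by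
    intro t ht
    have ht0 : (0:ℝ) ≤ t := le_of_lt ht
    rw [hE, ← tsum_mul_right]
    refine tsum_congr fun n ↦ ?_
    have hbase : -a * (t * u) ^ α = -b * t ^ α := by
      rw [Real.mul_rpow ht0 hu.le, hbdef]
      ring
    simp only [F]
    rw [hbase, mul_pow, add_sub_cancel_right, Real.rpow_mul ht0, Real.rpow_natCast]
    ring
  have key := hasSum_integral_of_summable_integral_norm hint hsum
  simp only [hval] at key
  have hgeom : HasSum (fun n : ℕ ↦ (-b) ^ n) (1 - -b)⁻¹ :=
    hasSum_geometric_of_abs_lt_one (by rwa [abs_neg, abs_of_pos hb])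
  rw [setIntegral_congr_fun measurableSet_Ioi hpt, key.unique hgeom, sub_neg_eq_add, one_div]
end

section
/- Let α ∈ (0,1), a > 0, and u > 0 with a·u^α < 1. Then the Sumudu transform of the function t ↦ 1 − E_α(−a·t^α) satisfies ∫₀^∞ (1 − E_α(−a·(tu)^α))·e^{−t} dt = a·u^α/(1 + a·u^α). -/
/-!
With `c = a * u ^ α`, the Mittag-Leffler series of `1 - E (-a * (t * u) ^ α)` has terms
`-(-c) ^ n / Γ(α * n + 1) * t ^ (α * n)` for `n ≥ 1`. Multiplying by `exp (-t)` and integrating,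
Euler's integral cancels the Gamma factor, so the `n`-th term contributes `-(-c) ^ n`, and its
absolute value integrates to `c ^ n`. Since `0 < c < 1` the latter are summable, which justifies
integrating term by term, and the resulting geometric series sums to `c / (1 + c)`.

Splitting off the `n = 0` term requires the series to converge at every point. This follows from
`Γ(s + 1) ≥ T ^ s * exp (-T)`, valid for all `T > 0` and `s ≥ 0`.
-/

open MeasureTheory Real Set

/-- Restricting Euler's integral to `(T, ∞)`, where `x ^ s ≥ T ^ s`, bounds `Γ(s + 1)` below. -/
lemma rpow_mul_exp_neg_le_Gamma {s T : ℝ} (hs : 0 ≤ s) (hT : 0 < T) :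
    T ^ s * Real.exp (-T) ≤ Real.Gamma (s + 1) := by
  have hint := Real.GammaIntegral_convergent (s := s + 1) (by linarith)
  rw [Real.Gamma_eq_integral (by linarith), ← integral_exp_neg_Ioi T, ← integral_const_mul]
  have hsub : Ioi T ⊆ Ioi (0 : ℝ) := Ioi_subset_Ioi hT.le
  refine le_trans (setIntegral_mono_on ((integrableOn_exp_neg_Ioi T).const_mul _)
    (hint.mono_set hsub) measurableSet_Ioi ?_)
    (setIntegral_mono_set hint ?_ hsub.eventuallyLE)
  · intro x hx
    rw [add_sub_cancel_right, mul_comm]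
    gcongr
    exact le_of_lt hx
  · filter_upwards [ae_restrict_mem measurableSet_Ioi] with x hx
    have hx : 0 < x := hx
    simp only [Pi.zero_apply]
    positivity

lemma summable_mittagLeffler {α : ℝ} (hα : 0 < α) (x : ℝ) :
    Summable fun n : ℕ => x ^ n / Real.Gamma (α * n + 1) := by
  -- `T` is chosen so that `T ^ α = 2 * (|x| + 1)`, making the terms `O(2⁻ⁿ)`.
  have hb : 0 < 2 * (|x| + 1) := by positivity
  set T : ℝ := (2 * (|x| + 1)) ^ (α⁻¹) with hTdef
  have hT : 0 < T := by positivity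
  have hTα : T ^ α = 2 * (|x| + 1) := Real.rpow_inv_rpow hb.le hα.ne'
  refine Summable.of_norm_bounded
    (summable_geometric_two.mul_left (Real.exp T)) fun n => ?_
  have hG := rpow_mul_exp_neg_le_Gamma (s := α * n) (by positivity) hT
  have hGpos : 0 < Real.Gamma (α * n + 1) := Real.Gamma_pos_of_pos (by positivity)
  rw [Real.rpow_mul hT.le, hTα, Real.rpow_natCast] at hG
  rw [norm_div, norm_pow, Real.norm_eq_abs, Real.norm_of_nonneg hGpos.le, div_le_iff₀ hGpos]
  calc |x| ^ n ≤ (|x| + 1) ^ n := by gcongr; linarith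
    _ = Real.exp T * (1 / 2) ^ n * ((2 * (|x| + 1)) ^ n * Real.exp (-T)) := by
      rw [Real.exp_neg, mul_pow, div_pow, one_pow]
      field_simp
    _ ≤ _ := by gcongr

/-- Sumudu transform of 1 minus the Mittag-Leffler function:
S[1 − E_α(−a·t^α)](u) = a·u^α/(1 + a·u^α). -/
theorem sumudu_one_sub_mittagLeffler
    (α a u : ℝ) (hα0 : 0 < α) (hα1 : α < 1) (ha : 0 < a) (hu : 0 < u)
    (hau : a * u ^ α < 1)
    (E : ℝ → ℝ) (hE : ∀ x : ℝ, E x = ∑' n : ℕ, x ^ n / Real.Gamma (α * n + 1)) :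
    ∫ t in Ioi (0:ℝ), (1 - E (-a * (t * u) ^ α)) * Real.exp (-t)
      = a * u ^ α / (1 + a * u ^ α) := by
  set c : ℝ := a * u ^ α with hc
  have hc0 : 0 < c := by positivity
  have hs (n : ℕ) : 0 < α * ((n + 1 : ℕ) : ℝ) + 1 := by positivity
  have hG (n : ℕ) : 0 < Real.Gamma (α * ((n + 1 : ℕ) : ℝ) + 1) := Real.Gamma_pos_of_pos (hs n)
  -- The terms of index `n + 1`, written so that the integrand of `Γ` is visible.
  let F : ℕ → ℝ → ℝ := fun n t =>
    -(-c) ^ (n + 1) / Real.Gamma (α * ((n + 1 : ℕ) : ℝ) + 1) *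
      (Real.exp (-t) * t ^ (α * ((n + 1 : ℕ) : ℝ) + 1 - 1))
  have hFint (n : ℕ) : Integrable (F n) (volume.restrict (Ioi 0)) :=
    (Real.GammaIntegral_convergent (hs n)).const_mul _
  have hFval (n : ℕ) : ∫ t in Ioi (0:ℝ), F n t = c * (-c) ^ n := by
    simp only [F]
    rw [integral_const_mul, ← Real.Gamma_eq_integral (hs n), div_mul_cancel₀ _ (hG n).ne']
    ring
  have hFnorm (n : ℕ) : ∫ t in Ioi (0:ℝ), ‖F n t‖ = c * c ^ n := by
    have : ∫ t in Ioi (0:ℝ), ‖F n t‖ = ∫ t in Ioi (0:ℝ),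
        c ^ (n + 1) / Real.Gamma (α * ((n + 1 : ℕ) : ℝ) + 1) *
          (Real.exp (-t) * t ^ (α * ((n + 1 : ℕ) : ℝ) + 1 - 1)) := by
      refine setIntegral_congr_fun measurableSet_Ioi fun t ht => ?_
      have ht : 0 < t := ht
      simp only [F]
      rw [norm_mul, norm_div, norm_neg, norm_pow, norm_neg, Real.norm_of_nonneg hc0.le,
        Real.norm_of_nonneg (hG n).le, Real.norm_of_nonneg (by positivity)]
    rw [this, integral_const_mul, ← Real.Gamma_eq_integral (hs n), div_mul_cancel₀ _ (hG n).ne']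
    ring
  have hsum : Summable fun n => ∫ t in Ioi (0:ℝ), ‖F n t‖ := by
    simp only [hFnorm]
    exact (summable_geometric_of_lt_one hc0.le hau).mul_left c
  have hkey := integral_tsum_of_summable_integral_norm hFint hsum
  have hpt : ∀ t ∈ Ioi (0:ℝ),
      (1 - E (-a * (t * u) ^ α)) * Real.exp (-t) = ∑' n, F n t := by
    intro t ht
    have ht : 0 < t := ht
    rw [hE, (summable_mittagLeffler hα0 _).tsum_eq_zero_add]
    simp only [pow_zero, Nat.cast_zero, mul_zero, zero_add, Real.Gamma_one, div_one,
      sub_add_cancel_left]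
    rw [← tsum_neg, ← tsum_mul_right]
    refine tsum_congr fun n => ?_
    simp only [F]
    have hx : -a * (t * u) ^ α = -c * t ^ α := by
      rw [Real.mul_rpow ht.le hu.le, hc]; ring
    rw [add_sub_cancel_right, Real.rpow_mul ht.le, Real.rpow_natCast, hx, mul_pow]
    ring
  rw [setIntegral_congr_fun measurableSet_Ioi hpt, ← hkey]
  simp only [hFval]
  rw [tsum_mul_left, tsum_geometric_of_abs_lt_one (by rwa [abs_neg, abs_of_pos hc0]),
    sub_neg_eq_add, div_eq_mul_inv]
end

section
/- Let p > 0, q > 0, μ ∈ (0,1), set k* = (p/q)^{1/(1−μ)}, and let k : [0,∞) → ℝ be continuously differentiable with k(0) = k₀ where 0 < k₀ < k*, and k'(t) = p·k(t)^μ − q·k(t) for all t ≥ 0. Then k is strictly monotonically increasing on [0,∞), k(t) < k* for all t ≥ 0, and k(t) → k* as t → ∞. -/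
open Real Set Filter

/-!
The Solow–Swan equation is a Bernoulli equation. At the level `k₀ < k*` the right-hand side is
positive, so a solution starting at `k₀` can never go below `k₀` (`solow_swan_ge_initial`); in
particular it stays positive. Hence `z = k ^ (1 - μ)` is differentiable and solves the linear
equation `z' = (1 - μ) (p - q z)`, which gives the closed form
`k t = (p / q - (p / q - k₀ ^ (1 - μ)) * exp (-(1 - μ) q t)) ^ (1 / (1 - μ))`
(`solow_swan_explicit`). Monotonicity, the bound and the limit are read off from this formula.
-/

/-- A solution starting at a positive `k₀` below equilibrium (the hypothesis `hlt` is
`k₀ < k*` raised to the power `1 - μ`) stays at or above `k₀`, since its derivative is positive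
whenever it touches that level. -/
lemma solow_swan_ge_initial
    {p q μ k₀ : ℝ} (hq : 0 < q) {k : ℝ → ℝ}
    (hode : ∀ t ≥ (0:ℝ), HasDerivWithinAt k (p * k t ^ μ - q * k t) (Ici 0) t)
    (hk0 : k 0 = k₀) (hk₀pos : 0 < k₀) (hlt : k₀ ^ (1 - μ) < p / q)
    {t : ℝ} (ht : 0 ≤ t) : k₀ ≤ k t := by
  have hrate : 0 < p * k₀ ^ μ - q * k₀ := by
    have h1 : k₀ = k₀ ^ (1 - μ) * k₀ ^ μ := by
      rw [← rpow_add hk₀pos]; simp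
    have h2 : 0 < k₀ ^ μ := rpow_pos_of_pos hk₀pos _
    have h3 : k₀ ^ (1 - μ) * q < p := (lt_div_iff₀ hq).1 hlt
    have h4 : q * k₀ = (k₀ ^ (1 - μ) * q) * k₀ ^ μ := by
      calc q * k₀ = q * (k₀ ^ (1 - μ) * k₀ ^ μ) := by rw [← h1]
        _ = _ := by ring
    rw [h4]
    nlinarith [mul_lt_mul_of_pos_right h3 h2]
  have key := image_le_of_deriv_right_lt_deriv_boundary (f := fun s => - k s)
    (f' := fun s => -(p * k s ^ μ - q * k s)) (a := 0) (b := t) (B := fun _ => -k₀)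
    (B' := fun _ => 0)
    (fun s hs => ((hode s hs.1).continuousWithinAt.mono Icc_subset_Ici_self).neg)
    (fun s hs => ((hode s hs.1).mono (Ici_subset_Ici.2 hs.1)).neg)
    (by simp [hk0]) (fun s => hasDerivAt_const s _)
    (fun s _ hs => by
      have hs' : k s = k₀ := neg_injective hs
      simp only [hs']
      linarith)
  have := key ⟨ht, le_refl t⟩
  simpa using this

/-- Closed form of the solution, in the Bernoulli variable `k ^ (1 - μ)`. -/
lemma solow_swan_explicit
    {p q μ k₀ : ℝ} (hq : 0 < q) {k : ℝ → ℝ}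
    (hode : ∀ t ≥ (0:ℝ), HasDerivWithinAt k (p * k t ^ μ - q * k t) (Ici 0) t)
    (hk0 : k 0 = k₀) (hpos : ∀ t ≥ (0:ℝ), 0 < k t)
    {t : ℝ} (ht : 0 ≤ t) :
    k t ^ (1 - μ) = p / q - (p / q - k₀ ^ (1 - μ)) * exp (-((1 - μ) * q * t)) := by
  -- Multiplying `p / q - z` by the integrating factor gives a conserved quantity.
  have hder : ∀ s ≥ (0:ℝ), HasDerivWithinAt
      (fun s => (p / q - k s ^ (1 - μ)) * exp ((1 - μ) * q * s)) 0 (Ici 0) s := by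
    intro s hs
    have hz := (hode s hs).rpow_const (p := 1 - μ) (Or.inl (hpos s hs).ne')
    have he : HasDerivWithinAt (fun s => exp ((1 - μ) * q * s))
        (exp ((1 - μ) * q * s) * ((1 - μ) * q * 1)) (Ici 0) s :=
      (((hasDerivAt_id s).const_mul ((1 - μ) * q)).exp).hasDerivWithinAt
    refine ((hz.const_sub (p / q)).mul he).congr_deriv ?_
    have e1 : k s ^ μ * k s ^ (1 - μ - 1) = 1 := by
      rw [← rpow_add (hpos s hs)]; simp
    have e2 : k s * k s ^ (1 - μ - 1) = k s ^ (1 - μ) := by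
      nth_rewrite 1 [← rpow_one (k s)]
      rw [← rpow_add (hpos s hs)]; congr 1; ring
    have e3 : p / q * q = p := div_mul_cancel₀ p hq.ne'
    linear_combination exp ((1 - μ) * q * s) * (1 - μ) * (-p * e1 + q * e2 + e3)
  have hconst := constant_of_has_deriv_right_zero (a := 0) (b := t)
    (fun s hs => (hder s hs.1).continuousWithinAt.mono Icc_subset_Ici_self)
    (fun s hs => (hder s hs.1).mono (Ici_subset_Ici.2 hs.1)) t ⟨ht, le_refl t⟩
  simp only [hk0, mul_zero, exp_zero, mul_one] at hconst
  rw [← hconst, mul_assoc, ← exp_add]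
  simp

/-- If 0 < k₀ < k* = (p/q)^{1/(1−μ)}, the Solow–Swan solution is strictly
increasing on [0,∞), stays below k*, and converges to k* as t → ∞. -/
theorem solow_swan_convergence_from_below
    (p q μ k₀ : ℝ) (hp : 0 < p) (hq : 0 < q) (hμ0 : 0 < μ) (hμ1 : μ < 1)
    (k : ℝ → ℝ)
    (hode : ∀ t ≥ (0:ℝ), HasDerivWithinAt k (p * k t ^ μ - q * k t) (Ici 0) t)
    (hk0 : k 0 = k₀)
    (hk₀pos : 0 < k₀) (hk₀lt : k₀ < (p / q) ^ (1 / (1 - μ))) :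
    StrictMonoOn k (Ici 0) ∧
    (∀ t ≥ (0:ℝ), k t < (p / q) ^ (1 / (1 - μ))) ∧
    Tendsto k atTop (nhds ((p / q) ^ (1 / (1 - μ)))) := by
  have hν : 0 < 1 - μ := by linarith
  have hpq : 0 < p / q := div_pos hp hq
  have hstar : ((p / q) ^ (1 / (1 - μ))) ^ (1 - μ) = p / q := by
    rw [← rpow_mul hpq.le, one_div_mul_cancel hν.ne', rpow_one]
  have hlt : k₀ ^ (1 - μ) < p / q := by
    have := rpow_lt_rpow hk₀pos.le hk₀lt hν
    rwa [hstar] at this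
  have hpos : ∀ t ≥ (0:ℝ), 0 < k t := fun t ht =>
    hk₀pos.trans_le (solow_swan_ge_initial hq hode hk0 hk₀pos hlt ht)
  have hz : ∀ t ≥ (0:ℝ), k t ^ (1 - μ) =
      p / q - (p / q - k₀ ^ (1 - μ)) * exp (-((1 - μ) * q * t)) :=
    fun t ht => solow_swan_explicit hq hode hk0 hpos ht
  have hc : 0 < p / q - k₀ ^ (1 - μ) := sub_pos.2 hlt
  have ha : 0 < (1 - μ) * q := mul_pos hν hq
  refine ⟨fun s hs t ht hst => ?_, fun t ht => ?_, ?_⟩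
  · rw [← rpow_lt_rpow_iff (hpos s hs).le (hpos t ht).le hν, hz s hs, hz t ht]
    gcongr
  · rw [← rpow_lt_rpow_iff (hpos t ht).le (by positivity) hν, hstar, hz t ht]
    linarith [mul_pos hc (exp_pos (-((1 - μ) * q * t)))]
  · have hexp : Tendsto (fun t => exp (-((1 - μ) * q * t))) atTop (nhds 0) :=
      tendsto_exp_neg_atTop_nhds_zero.comp (tendsto_id.const_mul_atTop ha)
    have hlim := (hexp.const_mul (p / q - k₀ ^ (1 - μ))).const_sub (p / q)
    rw [mul_zero, sub_zero] at hlim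
    refine (hlim.rpow_const (p := 1 / (1 - μ)) (Or.inl hpq.ne')).congr' ?_
    filter_upwards [eventually_ge_atTop 0] with t ht
    rw [← hz t ht, ← rpow_mul (hpos t ht).le, mul_one_div_cancel hν.ne', rpow_one]
end

section
/- Let p > 0, q > 0, μ ∈ (0,1), set k* = (p/q)^{1/(1−μ)}, and let k : [0,∞) → ℝ be continuously differentiable with k(0) = k₀ where k₀ > k*, and k'(t) = p·k(t)^μ − q·k(t) for all t ≥ 0. Then k is strictly monotonically decreasing on [0,∞), k(t) > k* for all t ≥ 0, and k(t) → k* as t → ∞. -/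
/-!
The substitution `u = k ^ (1 - μ)` turns the equation into the linear one
`u' = (1 - μ) * (p - q * u)` as long as `k` is positive, so that
`u t = p / q + (u 0 - p / q) * exp (-((1 - μ) * q * t))` (`solow_closed_form`). In particular
`u > p / q`, that is `k > k*`, on every interval `[0, T]` where `k` is positive. At a first time
with `k ≤ k*`, continuity gives `k = k* > 0`, hence positivity up to and including that time,
and the formula gives the contradiction `k > k*`. So `k` stays above `k*`, the formula holds for
all `t ≥ 0`, and strict decrease and convergence are read off from it.
-/

open Real Set Filter

/-- Bernoulli's closed form, valid at `T` when `k` is positive on the closed interval `[0, T]`. -/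
lemma solow_closed_form {p q μ : ℝ} (hq : 0 < q)
    {k : ℝ → ℝ}
    (hode : ∀ t ≥ (0:ℝ), HasDerivWithinAt k (p * k t ^ μ - q * k t) (Ici 0) t)
    {T : ℝ} (hT : 0 ≤ T) (hpos : ∀ t ∈ Icc 0 T, 0 < k t) :
    k T ^ (1 - μ) = p / q + (k 0 ^ (1 - μ) - p / q) * exp (-((1 - μ) * q * T)) := by
  have hd : ∀ t ∈ Icc 0 T, HasDerivWithinAt
      (fun t => (k t ^ (1 - μ) - p / q) * exp ((1 - μ) * q * t)) 0 (Ici 0) t := by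
    intro t ht
    have h1 := ((hode t ht.1).rpow_const (p := 1 - μ) (Or.inl (hpos t ht).ne')).sub_const (p / q)
    have h2 : HasDerivWithinAt (fun t : ℝ => exp ((1 - μ) * q * t))
        (exp ((1 - μ) * q * t) * ((1 - μ) * q * 1)) (Ici 0) t :=
      (((hasDerivAt_id t).const_mul ((1 - μ) * q)).exp).hasDerivWithinAt
    refine (h1.mul h2).congr_deriv ?_
    have e1 : k t ^ μ * k t ^ (1 - μ - 1) = 1 := by
      rw [← rpow_add (hpos t ht)]; simp
    have e2 : k t * k t ^ (1 - μ - 1) = k t ^ (1 - μ) := by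
      nth_rewrite 1 [← rpow_one (k t)]
      rw [← rpow_add (hpos t ht)]; congr 1; ring
    have e3 : q * (p / q) = p := by field_simp
    linear_combination (exp ((1 - μ) * q * t) * (1 - μ)) * (p * e1 - q * e2 - e3)
  have hc := constant_of_has_deriv_right_zero (a := 0) (b := T)
    (fun t ht => ((hd t ht).continuousWithinAt).mono Icc_subset_Ici_self)
    (fun t ht => (hd t ⟨ht.1, ht.2.le⟩).mono (Ici_subset_Ici.2 ht.1)) T ⟨hT, le_rfl⟩
  simp only [mul_zero, exp_zero, mul_one] at hc
  rw [← hc, mul_assoc, ← exp_add]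
  simp

/-- If k₀ > k* = (p/q)^{1/(1−μ)}, the Solow–Swan solution is strictly
decreasing on [0,∞), stays above k*, and converges to k* as t → ∞. -/
theorem solow_swan_convergence_from_above
    (p q μ k₀ : ℝ) (hp : 0 < p) (hq : 0 < q) (hμ0 : 0 < μ) (hμ1 : μ < 1)
    (k : ℝ → ℝ)
    (hode : ∀ t ≥ (0:ℝ), HasDerivWithinAt k (p * k t ^ μ - q * k t) (Ici 0) t)
    (hk0 : k 0 = k₀)
    (hk₀gt : (p / q) ^ (1 / (1 - μ)) < k₀) :
    StrictAntiOn k (Ici 0) ∧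
    (∀ t ≥ (0:ℝ), (p / q) ^ (1 / (1 - μ)) < k t) ∧
    Tendsto k atTop (nhds ((p / q) ^ (1 / (1 - μ)))) := by
  have hμ : 0 < 1 - μ := by linarith
  have hpq : 0 < p / q := by positivity
  set K := (p / q) ^ (1 / (1 - μ)) with hK
  have hKpos : 0 < K := by positivity
  have hKpow : K ^ (1 - μ) = p / q := by
    rw [hK, ← rpow_mul hpq.le, one_div_mul_cancel hμ.ne', rpow_one]
  have hA : 0 < k 0 ^ (1 - μ) - p / q := by
    rw [← hKpow, hk0]
    exact sub_pos.2 (rpow_lt_rpow hKpos.le hk₀gt hμ)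
  have hcont : ContinuousOn k (Ici 0) := fun t ht => (hode t ht).continuousWithinAt
  have habove_of_pos : ∀ T ≥ (0:ℝ), (∀ t ∈ Icc 0 T, 0 < k t) → K < k T := by
    intro T hT hpos
    have h := solow_closed_form hq hode hT hpos
    rw [← rpow_lt_rpow_iff hKpos.le (hpos T ⟨hT, le_rfl⟩).le hμ, hKpow, h]
    have := mul_pos hA (exp_pos (-((1 - μ) * q * T)))
    linarith
  have habove : ∀ t ≥ (0:ℝ), K < k t := by
    intro t ht
    by_contra! hle
    have hclosed : IsCompact (Icc 0 t ∩ k ⁻¹' Iic K) :=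
      isCompact_Icc.of_isClosed_subset
        ((hcont.mono Icc_subset_Ici_self).preimage_isClosed_of_isClosed isClosed_Icc isClosed_Iic)
        inter_subset_left
    -- `T` is the first time at which `k ≤ K`.
    obtain ⟨T, ⟨hTI, hTK⟩, hmin⟩ := hclosed.exists_isLeast ⟨t, ⟨ht, le_rfl⟩, hle⟩
    have hbefore : ∀ s ∈ Ico 0 T, K < k s := by
      intro s hs
      by_contra! hsK
      exact absurd (hmin ⟨⟨hs.1, hs.2.le.trans hTI.2⟩, hsK⟩) (not_le.2 hs.2)
    have hT0 : 0 < T := by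
      rcases hTI.1.eq_or_lt with h | h
      · have : k T ≤ K := hTK
        rw [← h, hk0] at this
        linarith
      · exact h
    have hTge : K ≤ k T := by
      have hmem : T ∈ closure (Ico 0 T) := by
        rw [closure_Ico hT0.ne]
        exact ⟨hT0.le, le_rfl⟩
      have := mem_closure_iff_nhdsWithin_neBot.1 hmem
      exact ge_of_tendsto ((hcont T hT0.le).mono Ico_subset_Ici_self)
        (eventually_nhdsWithin_of_forall fun s hs => (hbefore s hs).le)
    refine absurd (habove_of_pos T hT0.le fun s hs => ?_) (not_lt.2 hTK)
    rcases hs.2.eq_or_lt with h | h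
    · rw [h]; linarith
    · exact hKpos.trans (hbefore s ⟨hs.1, h⟩)
  have hform : ∀ t ≥ (0:ℝ),
      k t ^ (1 - μ) = p / q + (k 0 ^ (1 - μ) - p / q) * exp (-((1 - μ) * q * t)) :=
    fun t ht => solow_closed_form hq hode ht fun s hs => hKpos.trans (habove s hs.1)
  refine ⟨?_, habove, ?_⟩
  · intro s hs t ht hst
    rw [← rpow_lt_rpow_iff (hKpos.trans (habove t ht)).le (hKpos.trans (habove s hs)).le hμ,
      hform t ht, hform s hs]
    gcongr
  · have hlim : Tendsto (fun t : ℝ => exp (-((1 - μ) * q * t))) atTop (nhds 0) :=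
      tendsto_exp_neg_atTop_nhds_zero.comp (tendsto_id.const_mul_atTop (mul_pos hμ hq))
    have h1 : Tendsto (fun t : ℝ => p / q + (k 0 ^ (1 - μ) - p / q) * exp (-((1 - μ) * q * t)))
        atTop (nhds (p / q)) := by
      simpa using (hlim.const_mul (k 0 ^ (1 - μ) - p / q)).const_add (p / q)
    refine (h1.rpow_const (p := 1 / (1 - μ)) (Or.inl hpq.ne')).congr' ?_
    filter_upwards [eventually_ge_atTop 0] with t ht
    rw [← hform t ht, ← rpow_mul (hKpos.trans (habove t ht)).le, mul_one_div_cancel hμ.ne',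
      rpow_one]
end
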